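/- arXiv:1511.03106 — 3 statements merged into one kernel-verified Lean document; each statement's English description precedes it below -/
import Mathlib

section
/- Let 0 < σ < 1 and A > 0. There exists a smooth function ρ : ℝ → ℝ with ρ(s) = 1 for s ≤ 0, ρ(s) = σ for s ≥ A, and d/ds (e^s ρ(s)) > 0 for all s, if and only if A > ln(1/σ). -/
/-!
Necessity: `exp s * ρ s` is strictly increasing, so its values at `0` and `A` give
`1 < exp A * σ`.

Sufficiency: put `L = log (1 / σ)` and look for `ρ = exp (-L * u)`, with `u` smooth, `u = 0` on
`(-∞, 0]` and `u = 1` on `[A, ∞)`. Then `exp s * ρ s = exp (s - L * u s)`, whose derivative is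
positive exactly when `L * u' < 1`. Take for `u` the primitive of a normalized bump function
supported in `(0, A)` which is constant on the concentric interval of length `l`, where
`L < l < A`. Its maximum is at most `1 / l`, so `L * u' ≤ L / l < 1`.
-/

open MeasureTheory in
/-- A smooth step from `0` to `1` across `[0, A]` whose slope stays below any prescribed bound
`1 / l` exceeding the average slope `1 / A`. -/
lemma exists_smooth_step (A l : ℝ) (hl : 0 < l) (hlA : l < A) :
    ∃ u v : ℝ → ℝ, ContDiff ℝ (⊤ : ℕ∞) u ∧ (∀ s ≤ 0, u s = 0) ∧ (∀ s ≥ A, u s = 1) ∧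
      (∀ s, HasDerivAt u (v s) s) ∧ ∀ s, v s ≤ 1 / l := by
  let f : ContDiffBump (A / 2) := ⟨l / 2, A / 2, by linarith, by linarith⟩
  have hsm : ContDiff ℝ (⊤ : ℕ∞) (f.normed volume) := f.contDiff_normed
  have hsupp : Function.support (f.normed volume) = Set.Ioo 0 A := by
    rw [f.support_normed_eq, Real.ball_eq_Ioo]
    simp [f]
  have hder (s : ℝ) : HasDerivAt (fun t => ∫ x in (0 : ℝ)..t, f.normed volume x)
      (f.normed volume s) s :=
    intervalIntegral.integral_hasDerivAt_right (hsm.continuous.intervalIntegrable _ _)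
      (hsm.continuous.stronglyMeasurableAtFilter _ _) hsm.continuous.continuousAt
  refine ⟨_, _, ?_, ?_, ?_, hder, ?_⟩
  · rw [contDiff_infty_iff_deriv]
    refine ⟨fun s => (hder s).differentiableAt, ?_⟩
    rwa [funext fun s => (hder s).deriv]
  · intro s hs
    rw [intervalIntegral.integral_congr (g := fun _ => 0)]
    · simp
    · intro x hx
      rw [Set.uIcc_of_ge hs] at hx
      refine Function.notMem_support.1 fun h => ?_
      rw [hsupp] at h
      exact absurd h.1 (not_lt.2 hx.2)
  · intro s hs
    rw [intervalIntegral.integral_eq_integral_of_support_subset, f.integral_normed]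
    rw [hsupp]
    exact fun x hx => ⟨hx.1, hx.2.le.trans hs⟩
  · intro s
    have h := f.normed_le_div_measure_closedBall_rIn volume s
    rw [Real.volume_real_closedBall f.rIn_pos.le] at h
    convert h using 2
    change l = 2 * (l / 2)
    ring

/-- For 0 < σ < 1 and A > 0, a smooth interpolation ρ with ρ = 1 on
(-∞,0], ρ = σ on [A,∞) and d/ds (e^s ρ(s)) > 0 everywhere exists iff A > ln(1/σ). -/
theorem stmt0 (σ A : ℝ) (hσ0 : 0 < σ) (hσ1 : σ < 1) (hA : 0 < A) :
    (∃ ρ : ℝ → ℝ, ContDiff ℝ (⊤ : ℕ∞) ρ ∧ (∀ s ≤ 0, ρ s = 1) ∧ (∀ s ≥ A, ρ s = σ) ∧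
      ∀ s, 0 < deriv (fun t => Real.exp t * ρ t) s) ↔ A > Real.log (1 / σ) := by
  constructor
  · rintro ⟨ρ, -, h0, h1, hd⟩
    have h := strictMono_of_deriv_pos hd hA
    simp only [h0 0 le_rfl, h1 A le_rfl, Real.exp_zero, mul_one] at h
    rw [gt_iff_lt, Real.log_lt_iff_lt_exp (by positivity), div_lt_iff₀ hσ0]
    exact h
  · intro h
    have hL : 0 < Real.log (1 / σ) := Real.log_pos (by rw [lt_div_iff₀ hσ0]; linarith)
    have hLσ : Real.exp (-Real.log (1 / σ)) = σ := by
      rw [one_div, Real.log_inv, neg_neg, Real.exp_log hσ0]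
    set L := Real.log (1 / σ)
    obtain ⟨l, hLl, hlA⟩ := exists_between h
    obtain ⟨u, v, hu, hu0, hu1, hder, hv⟩ := exists_smooth_step A l (hL.trans hLl) hlA
    refine ⟨fun s => Real.exp (-L * u s), (contDiff_const.mul hu).exp, ?_, ?_, ?_⟩
    · intro s hs
      simp [hu0 s hs]
    · intro s hs
      simp only [hu1 s hs, mul_one, hLσ]
    · intro s
      have hslope : L * v s < 1 := calc
        L * v s ≤ L * (1 / l) := mul_le_mul_of_nonneg_left (hv s) hL.le
        _ < 1 := by rw [mul_one_div, div_lt_one (hL.trans hLl)]; exact hLl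
      have hd := ((hasDerivAt_id s).add ((hder s).const_mul (-L))).exp
      have he : (fun t => Real.exp t * Real.exp (-L * u t)) =
          fun t => Real.exp ((id + fun y => -L * u y : ℝ → ℝ) t) := by
        funext t
        simp [Real.exp_add]
      rw [he, hd.deriv]
      exact mul_pos (Real.exp_pos _) (by linarith)
end

section
/- Let 0 < u, v < 1 and A > 0. There exists a smooth function ρ : ℝ → ℝ with ρ(s) = u for s ≤ 0, ρ(s) = v for s ≥ A, such that e^s ρ(s) is strictly increasing and e^s (ρ(s) − 1) is strictly decreasing on ℝ, if and only if A > ln(u/v) when u ≥ v and A > ln((1−u)/(1−v)) when u ≤ v (i.e., if and only if A > max(ln(u/v), ln((1−u)/(1−v)))). -/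
/-!
Put `f s = exp s * ρ s`. The two monotonicity conditions say that `f` and `exp - f` are both
strictly increasing. Comparing values at `0` and `A` gives `u < exp A * v` and
`1 - u < exp A * (1 - v)`, which is the lower bound on `A`.

Conversely, `f` is built from its derivative `exp * w`: what is needed is a smooth `w` with values
in `(0, 1)`, equal to `u` on `(-∞, 0]` and to `v` on `[A, ∞)`, with
`∫ t in 0..A, exp t * w t = exp A * v - u`. The inequalities on `A` say precisely that this target
lies strictly between `0` and `exp A - 1 = ∫ t in 0..A, exp t`. Such a `w` (`exists_slope`) equals
a constant `c` on most of `[0, A]`, where a bump function is `1` (`exists_bump`), and interpolates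
between the prescribed end values elsewhere; `c` is determined by the integral condition, and it
lies in `(0, 1)` as soon as the bump function fills enough of `[0, A]`.
-/

/-- A smooth function into `[0, 1]`, supported in `[0, A]`, whose `exp`-weighted integral is as
close as desired to that of the indicator function of `[0, A]`. -/
lemma exists_bump {A ε : ℝ} (hA : 0 < A) (hε : 0 < ε) :
    ∃ χ : ℝ → ℝ, ContDiff ℝ (⊤ : ℕ∞) χ ∧ (∀ s, 0 ≤ χ s) ∧ (∀ s, χ s ≤ 1) ∧
      (∀ s ≤ 0, χ s = 0) ∧ (∀ s ≥ A, χ s = 0) ∧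
      Real.exp A - 1 - ε < ∫ t in (0 : ℝ)..A, Real.exp t * χ t := by
  -- `η` is the width of the margin left at each end of `[0, A]`.
  obtain ⟨η, hη0, hηA, hη⟩ : ∃ η : ℝ, 0 < η ∧ η < A / 2 ∧
      Real.exp A - 1 - ε < Real.exp (A - η) - Real.exp η := by
    have hc : ContinuousAt (fun η : ℝ => Real.exp (A - η) - Real.exp η) 0 := by fun_prop
    have h1 : ∀ᶠ η in nhds (0 : ℝ), Real.exp A - 1 - ε < Real.exp (A - η) - Real.exp η :=
      hc.eventually_const_lt (by simp; linarith)
    have h2 : ∀ᶠ η in nhds (0 : ℝ), η < A / 2 := eventually_lt_nhds (by linarith)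
    obtain ⟨η, ⟨h3, h4⟩, h5⟩ := (((h1.and h2).filter_mono nhdsWithin_le_nhds).and
      (self_mem_nhdsWithin : Set.Ioi (0 : ℝ) ∈ nhdsWithin 0 (Set.Ioi 0))).exists
    exact ⟨η, h5, h4, h3⟩
  let φ : ContDiffBump (A / 2 : ℝ) := ⟨A / 2 - η, A / 2, by linarith, by linarith⟩
  have hφ : ContDiff ℝ (⊤ : ℕ∞) (fun s => φ s) := φ.contDiff
  have hcont : Continuous fun s => Real.exp s * φ s := Real.continuous_exp.mul hφ.continuous
  have hint : ∀ a b : ℝ, IntervalIntegrable (fun s => Real.exp s * φ s) MeasureTheory.volume a b :=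
    fun a b => hcont.intervalIntegrable a b
  refine ⟨φ, hφ, fun s => φ.nonneg, fun s => φ.le_one, fun s hs => ?_, fun s hs => ?_, ?_⟩
  · refine φ.zero_of_le_dist ?_
    change A / 2 ≤ _
    rw [Real.dist_eq, abs_of_nonpos (by linarith)]
    linarith
  · refine φ.zero_of_le_dist ?_
    change A / 2 ≤ _
    rw [Real.dist_eq, abs_of_nonneg (by linarith)]
    linarith
  · have hmid : ∫ t in η..(A - η), Real.exp t * φ t = Real.exp (A - η) - Real.exp η := by
      rw [← integral_exp]
      refine intervalIntegral.integral_congr fun t ht => ?_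
      rw [Set.uIcc_of_le (by linarith)] at ht
      have : φ t = 1 := by
        refine φ.one_of_mem_closedBall ?_
        change dist t (A / 2) ≤ A / 2 - η
        rw [Real.dist_eq, abs_le]
        exact ⟨by linarith [ht.1], by linarith [ht.2]⟩
      simp [this]
    have hnn : ∀ s, 0 ≤ Real.exp s * φ s := fun s => mul_nonneg (Real.exp_pos s).le φ.nonneg
    have hl : 0 ≤ ∫ t in (0 : ℝ)..η, Real.exp t * φ t :=
      intervalIntegral.integral_nonneg hη0.le fun t _ => hnn t
    have hr : 0 ≤ ∫ t in (A - η)..A, Real.exp t * φ t :=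
      intervalIntegral.integral_nonneg (by linarith) fun t _ => hnn t
    rw [← intervalIntegral.integral_add_adjacent_intervals (hint 0 η) (hint η A),
      ← intervalIntegral.integral_add_adjacent_intervals (hint η (A - η)) (hint (A - η) A)]
    linarith

/-- A smooth `w` with values in `(0, 1)`, prescribed constant ends, and an `exp`-weighted integral
over `[0, A]` that is prescribed anywhere in the open range `(0, exp A - 1)`. -/
lemma exists_slope {u v A D : ℝ} (hu0 : 0 < u) (hu1 : u < 1) (hv0 : 0 < v) (hv1 : v < 1)
    (hA : 0 < A) (hD0 : 0 < D) (hD1 : D < Real.exp A - 1) :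
    ∃ w : ℝ → ℝ, ContDiff ℝ (⊤ : ℕ∞) w ∧ (∀ s, 0 < w s) ∧ (∀ s, w s < 1) ∧
      (∀ s ≤ 0, w s = u) ∧ (∀ s ≥ A, w s = v) ∧
      ∫ t in (0 : ℝ)..A, Real.exp t * w t = D := by
  obtain ⟨χ, hχ, hχ0, hχ1, hχl, hχr, hχE⟩ :=
    exists_bump (ε := min D (Real.exp A - 1 - D)) hA (lt_min hD0 (by linarith))
  set E := ∫ t in (0 : ℝ)..A, Real.exp t * χ t with hE
  have hED : Real.exp A - 1 - D < E := by linarith [min_le_left D (Real.exp A - 1 - D)]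
  have hDE : D < E := by linarith [min_le_right D (Real.exp A - 1 - D)]
  have hE0 : 0 < E := hD0.trans hDE
  let b : ℝ → ℝ := fun s => u + (v - u) * Real.smoothTransition (s / A)
  have hb : ContDiff ℝ (⊤ : ℕ∞) b :=
    contDiff_const.add (contDiff_const.mul
      (Real.smoothTransition.contDiff.comp (contDiff_id.div_const A)))
  have hb0 : ∀ s, 0 < b s := fun s => by
    have h0 := Real.smoothTransition.nonneg (s / A)
    have h1 := Real.smoothTransition.le_one (s / A)
    change 0 < u + (v - u) * Real.smoothTransition (s / A)
    rcases h1.eq_or_lt with h | h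
    · rw [h]; linarith
    · nlinarith [mul_pos hu0 (sub_pos.2 h)]
  have hb1 : ∀ s, b s < 1 := fun s => by
    have h0 := Real.smoothTransition.nonneg (s / A)
    have h1 := Real.smoothTransition.le_one (s / A)
    change u + (v - u) * Real.smoothTransition (s / A) < 1
    rcases h1.eq_or_lt with h | h
    · rw [h]; linarith
    · nlinarith [mul_pos (sub_pos.2 hu1) (sub_pos.2 h), mul_nonneg h0 (sub_pos.2 hv1).le]
  have hbl : ∀ s ≤ 0, b s = u := fun s hs => by
    simp [b, Real.smoothTransition.zero_of_nonpos (div_nonpos_of_nonpos_of_nonneg hs hA.le)]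
  have hbr : ∀ s ≥ A, b s = v := fun s hs => by
    simp [b, Real.smoothTransition.one_of_one_le ((one_le_div hA).2 hs)]
  have hexp := Real.continuous_exp
  have hbc := hb.continuous
  have hχc := hχ.continuous
  set B := ∫ t in (0 : ℝ)..A, Real.exp t * (b t * (1 - χ t)) with hB
  have hB0 : 0 ≤ B := intervalIntegral.integral_nonneg hA.le fun t _ =>
    mul_nonneg (Real.exp_pos t).le (mul_nonneg (hb0 t).le (sub_nonneg.2 (hχ1 t)))
  have hB1 : B ≤ Real.exp A - 1 - E := by
    have h : B ≤ ∫ t in (0 : ℝ)..A, (Real.exp t - Real.exp t * χ t) := by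
      refine intervalIntegral.integral_mono_on hA.le ?_ ?_ fun t _ => ?_
      · exact Continuous.intervalIntegrable (by fun_prop) _ _
      · exact Continuous.intervalIntegrable (by fun_prop) _ _
      · have := mul_le_of_le_one_left (sub_nonneg.2 (hχ1 t)) (hb1 t).le
        nlinarith [mul_le_mul_of_nonneg_left this (Real.exp_pos t).le]
    rw [intervalIntegral.integral_sub (Continuous.intervalIntegrable (by fun_prop) _ _)
      (Continuous.intervalIntegrable (by fun_prop) _ _), integral_exp, Real.exp_zero] at h
    exact h
  -- The middle value is forced by `B + c * E = D`.
  obtain ⟨c, hc⟩ : ∃ c, c = (D - B) / E := ⟨_, rfl⟩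
  have hc0 : 0 < c := by rw [hc]; exact div_pos (by linarith) hE0
  have hc1 : c < 1 := by rw [hc, div_lt_one hE0]; linarith
  refine ⟨fun s => b s * (1 - χ s) + c * χ s, ?_, fun s => ?_, fun s => ?_, fun s hs => ?_,
    fun s hs => ?_, ?_⟩
  · exact (hb.mul (contDiff_const.sub hχ)).add (contDiff_const.mul hχ)
  · rcases (hχ0 s).eq_or_lt with h | h
    · simpa [← h] using hb0 s
    · have := mul_nonneg (hb0 s).le (sub_nonneg.2 (hχ1 s))
      have := mul_pos hc0 h
      linarith
  · rcases (hχ0 s).eq_or_lt with h | h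
    · simpa [← h] using hb1 s
    · have := mul_le_of_le_one_left (sub_nonneg.2 (hχ1 s)) (hb1 s).le
      have := mul_lt_of_lt_one_left h hc1
      linarith
  · simp [hχl s hs, hbl s hs]
  · simp [hχr s hs, hbr s hs]
  · have : ∀ t, Real.exp t * (b t * (1 - χ t) + c * χ t)
        = Real.exp t * (b t * (1 - χ t)) + c * (Real.exp t * χ t) := fun t => by ring
    simp only [this]
    rw [intervalIntegral.integral_add (Continuous.intervalIntegrable (by fun_prop) _ _)
      (Continuous.intervalIntegrable (by fun_prop) _ _), intervalIntegral.integral_const_mul,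
      ← hB, ← hE, hc]
    field_simp
    ring

lemma log_div_lt_iff_lt_exp_mul {a b A : ℝ} (ha : 0 < a) (hb : 0 < b) :
    Real.log (a / b) < A ↔ a < Real.exp A * b := by
  rw [Real.log_lt_iff_lt_exp (div_pos ha hb), div_lt_iff₀ hb]

/-- For 0 < u, v < 1 and A > 0, a smooth ρ with ρ = u on (-∞,0], ρ = v on
[A,∞), e^s ρ(s) strictly increasing and e^s (ρ(s) - 1) strictly decreasing exists iff
A > max(ln(u/v), ln((1-u)/(1-v))). -/
theorem stmt2 (u v A : ℝ) (hu0 : 0 < u) (hu1 : u < 1) (hv0 : 0 < v) (hv1 : v < 1)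
    (hA : 0 < A) :
    (∃ ρ : ℝ → ℝ, ContDiff ℝ (⊤ : ℕ∞) ρ ∧ (∀ s ≤ 0, ρ s = u) ∧ (∀ s ≥ A, ρ s = v) ∧
      StrictMono (fun s => Real.exp s * ρ s) ∧
      StrictAnti (fun s => Real.exp s * (ρ s - 1))) ↔
    A > max (Real.log (u / v)) (Real.log ((1 - u) / (1 - v))) := by
  rw [gt_iff_lt, max_lt_iff, log_div_lt_iff_lt_exp_mul hu0 hv0,
    log_div_lt_iff_lt_exp_mul (sub_pos.2 hu1) (sub_pos.2 hv1)]
  constructor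
  · rintro ⟨ρ, -, hl, hr, hmono, hanti⟩
    have h1 := hmono hA
    have h2 := hanti hA
    simp only [hl 0 le_rfl, hr A le_rfl, Real.exp_zero] at h1 h2
    exact ⟨by linarith, by linarith⟩
  · rintro ⟨h1, h2⟩
    obtain ⟨w, hw, hw0, hw1, hwl, hwr, hwI⟩ :=
      exists_slope (D := Real.exp A * v - u) hu0 hu1 hv0 hv1 hA (by linarith) (by linarith)
    have hgs : ContDiff ℝ (⊤ : ℕ∞) fun t => Real.exp t * w t := Real.contDiff_exp.mul hw
    have hg := hgs.continuous
    let f : ℝ → ℝ := fun s => u + ∫ t in (0 : ℝ)..s, Real.exp t * w t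
    have hf : ∀ s, HasDerivAt f (Real.exp s * w s) s := fun s =>
      (intervalIntegral.integral_hasDerivAt_right (hg.intervalIntegrable _ _)
        (hg.stronglyMeasurableAtFilter _ _) hg.continuousAt).const_add u
    have hfs : ContDiff ℝ (⊤ : ℕ∞) f := by
      rw [contDiff_infty_iff_deriv]
      refine ⟨fun s => (hf s).differentiableAt, ?_⟩
      rwa [funext fun s => (hf s).deriv]
    have hfl : ∀ s ≤ 0, f s = Real.exp s * u := fun s hs => by
      have : ∫ t in (0 : ℝ)..s, Real.exp t * w t = ∫ t in (0 : ℝ)..s, Real.exp t * u :=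
        intervalIntegral.integral_congr fun t ht => by
          rw [Set.uIcc_of_ge hs] at ht
          simp only [hwl t ht.2]
      simp only [f, this, intervalIntegral.integral_mul_const, integral_exp, Real.exp_zero]
      ring
    have hfr : ∀ s ≥ A, f s = Real.exp s * v := fun s hs => by
      have : ∫ t in A..s, Real.exp t * w t = ∫ t in A..s, Real.exp t * v :=
        intervalIntegral.integral_congr fun t ht => by
          rw [Set.uIcc_of_le hs] at ht
          simp only [hwr t ht.1]
      simp only [f]
      rw [← intervalIntegral.integral_add_adjacent_intervals (hg.intervalIntegrable 0 A)
        (hg.intervalIntegrable A s), hwI, this, intervalIntegral.integral_mul_const, integral_exp]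
      ring
    have hρ : ∀ s, Real.exp s * (Real.exp (-s) * f s) = f s := fun s => by
      rw [← mul_assoc, ← Real.exp_add]; simp
    refine ⟨fun s => Real.exp (-s) * f s, ?_, fun s hs => ?_, fun s hs => ?_, ?_, ?_⟩
    · exact (Real.contDiff_exp.comp contDiff_neg).mul hfs
    · simp only [hfl s hs]
      rw [← mul_assoc, ← Real.exp_add]; simp
    · simp only [hfr s hs]
      rw [← mul_assoc, ← Real.exp_add]; simp
    · simp only [hρ]
      refine strictMono_of_deriv_pos fun s => ?_
      rw [(hf s).deriv]
      exact mul_pos (Real.exp_pos s) (hw0 s)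
    · simp only [mul_sub, hρ, mul_one]
      refine strictAnti_of_deriv_neg fun s => ?_
      rw [((hf s).fun_sub (Real.hasDerivAt_exp s)).deriv]
      nlinarith [mul_pos (Real.exp_pos s) (sub_pos.2 (hw1 s))]
end

section
/- Let f : ℝ → ℝ be smooth with f(s) = c_- for s ≤ 0 and f(s) = c_+ for s ≥ A, where A > 0 and c_-, c_+ > 0. If e^s f(s) is strictly increasing on ℝ then c_- < e^A c_+. Conversely, if c_- < e^A c_+ then there exists such a smooth f with e^s f(s) strictly increasing. -/
/-!
Necessity is strict monotonicity evaluated at `0 < A`.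

For sufficiency, write `f s = exp (h s - s)`, so that `exp s * f s = exp (h s)`, and set
`d = log (cp / cm) > -A`.  What is needed is a smooth strictly increasing `h` equal to
`s + log cm` for `s ≤ 0` and to `s + d + log cm` for `s ≥ A`.  Up to the constant `log cm`, it is
obtained by blending `s` into a slowly increasing line `ε + δ s` near `0`, and that line into
`s + d` near `A`.  Each blend is an upward transition, the new function lying above the old one
where they mix, so strict monotonicity is preserved (`strictMono_blend`).  The bound `d > -A`
leaves room for a line of positive slope.
-/

/-- A blend of two strictly increasing functions with an increasing weight is strictly increasing,
provided that the weight only changes between `x` and `y` when `a ≤ b` at one of the two points. -/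
lemma strictMono_blend {a b θ : ℝ → ℝ} (ha : StrictMono a) (hb : StrictMono b)
    (hθ : Monotone θ) (h0 : ∀ x, 0 ≤ θ x) (h1 : ∀ x, θ x ≤ 1)
    (hab : ∀ x y, x < y → θ x = θ y ∨ a x ≤ b x ∨ a y ≤ b y) :
    StrictMono (fun x => (1 - θ x) * a x + θ x * b x) := by
  -- a convex combination of two positive increments is positive
  have key : ∀ t p q : ℝ, 0 ≤ t → t ≤ 1 → 0 < p → 0 < q → 0 < (1 - t) * p + t * q := by
    intro t p q ht0 ht1 hp hq
    rcases ht0.eq_or_lt with rfl | ht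
    · simpa using hp
    · have := mul_pos ht hq
      have := mul_nonneg (sub_nonneg.2 ht1) hp.le
      linarith
  intro x y hxy
  have hax := sub_pos.2 (ha hxy)
  have hbx := sub_pos.2 (hb hxy)
  have hθx := sub_nonneg.2 (hθ hxy.le)
  have kx := key (θ x) _ _ (h0 x) (h1 x) hax hbx
  have ky := key (θ y) _ _ (h0 y) (h1 y) hax hbx
  show (1 - θ x) * a x + θ x * b x < (1 - θ y) * a y + θ y * b y
  rcases hab x y hxy with h | h | h
  · rw [← h]; linarith
  · have := mul_nonneg hθx (sub_nonneg.2 h)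
    linarith
  · have := mul_nonneg hθx (sub_nonneg.2 h)
    linarith

/-- A smooth strictly increasing function interpolating between `s` on `(-∞, 0]` and `s + d`
on `[A, ∞)`, for any shift `d > -A`. -/
lemma exists_smooth_strictMono_interp (A d : ℝ) (hA : 0 < A) (hd : 0 < A + d) :
    ∃ h : ℝ → ℝ, ContDiff ℝ (⊤ : ℕ∞) h ∧ (∀ s ≤ 0, h s = s) ∧ (∀ s ≥ A, h s = s + d) ∧
      StrictMono h := by
  -- The slope `δ` and the transition width `ε` are such that the line `ε + δ s` lies above `s`
  -- for `s ≤ ε` and below `s + d` for `s ≥ A - ε`.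
  obtain ⟨ε, hε, hεA, hεd⟩ : ∃ ε, 0 < ε ∧ ε ≤ A / 2 ∧ ε ≤ (A + d) / 3 :=
    ⟨min (A / 2) ((A + d) / 3), lt_min (by linarith) (by linarith),
      min_le_left _ _, min_le_right _ _⟩
  obtain ⟨δ, hδ, hδ1, hδA⟩ : ∃ δ, 0 < δ ∧ δ ≤ 1 ∧ δ * A ≤ (A + d) / 3 :=
    ⟨min 1 ((A + d) / 3 / A), lt_min one_pos (by positivity), min_le_left _ _,
      (le_div_iff₀ hA).1 (min_le_right _ _)⟩
  set θ : ℝ → ℝ := fun s => Real.smoothTransition (s / ε) with hθ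
  set η : ℝ → ℝ := fun s => Real.smoothTransition ((s - (A - ε)) / ε) with hη
  have θmono : Monotone θ := fun x y h => Real.smoothTransition.monotone (by gcongr)
  have ηmono : Monotone η := fun x y h => Real.smoothTransition.monotone (by gcongr)
  have θzero : ∀ s ≤ 0, θ s = 0 := fun s hs =>
    Real.smoothTransition.zero_of_nonpos (div_nonpos_of_nonpos_of_nonneg hs hε.le)
  have θone : ∀ s ≥ ε, θ s = 1 := fun s hs =>
    Real.smoothTransition.one_of_one_le ((one_le_div hε).2 hs)
  have ηzero : ∀ s ≤ A - ε, η s = 0 := fun s hs =>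
    Real.smoothTransition.zero_of_nonpos
      (div_nonpos_of_nonpos_of_nonneg (by linarith) hε.le)
  have ηone : ∀ s ≥ A, η s = 1 := fun s hs =>
    Real.smoothTransition.one_of_one_le ((one_le_div hε).2 (by linarith))
  have θsmooth : ContDiff ℝ (⊤ : ℕ∞) θ :=
    Real.smoothTransition.contDiff.comp (contDiff_id.div_const ε)
  have ηsmooth : ContDiff ℝ (⊤ : ℕ∞) η :=
    Real.smoothTransition.contDiff.comp ((contDiff_id.sub contDiff_const).div_const ε)
  set k : ℝ → ℝ := fun s => (1 - θ s) * s + θ s * (ε + δ * s) with hk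
  have kmono : StrictMono k := by
    refine strictMono_blend (a := fun s => s) (b := fun s => ε + δ * s) strictMono_id
      (fun x y h => by have := mul_lt_mul_of_pos_left h hδ; simpa using this) θmono
      (fun x => Real.smoothTransition.nonneg _) (fun x => Real.smoothTransition.le_one _) ?_
    intro x y hxy
    rcases le_or_gt ε x with hx | hx
    · left; rw [θone x hx, θone y (hx.trans hxy.le)]
    · right; left
      show x ≤ ε + δ * x
      rcases le_total 0 x with h0 | h0
      · nlinarith
      · nlinarith
  refine ⟨fun s => (1 - η s) * k s + η s * (s + d), ?_, ?_, ?_, ?_⟩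
  · fun_prop
  · intro s hs
    simp [hk, ηzero s (by linarith), θzero s hs]
  · intro s hs
    simp [ηone s hs]
  · refine strictMono_blend (b := fun s => s + d) kmono
      (fun x y h => by simpa using h) ηmono
      (fun x => Real.smoothTransition.nonneg _) (fun x => Real.smoothTransition.le_one _) ?_
    intro x y hxy
    rcases le_or_gt y (A - ε) with hy | hy
    · left; rw [ηzero y hy, ηzero x (hxy.le.trans hy)]
    · right; right
      -- `ε ≤ A / 2` keeps the two transition zones apart
      have hθy : θ y = 1 := θone y (by linarith)
      simp only [hk, hθy]
      nlinarith [mul_nonneg (sub_nonneg.2 hδ1) (sub_nonneg.2 hy.le), mul_pos hδ hε]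

/-- interpolation lemma.  If f is smooth, equal to c₋ on (-∞,0] and to c₊
on [A,∞) with A > 0 and c₋, c₊ > 0, and e^s f(s) is strictly increasing, then
c₋ < e^A c₊; conversely, if c₋ < e^A c₊ then such an f exists. -/
theorem stmt17 (A cm cp : ℝ) (hA : 0 < A) (hcm : 0 < cm) (hcp : 0 < cp) :
    (∀ f : ℝ → ℝ, ContDiff ℝ (⊤ : ℕ∞) f → (∀ s ≤ 0, f s = cm) → (∀ s ≥ A, f s = cp) →
      StrictMono (fun s => Real.exp s * f s) → cm < Real.exp A * cp) ∧
    (cm < Real.exp A * cp →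
      ∃ f : ℝ → ℝ, ContDiff ℝ (⊤ : ℕ∞) f ∧ (∀ s ≤ 0, f s = cm) ∧ (∀ s ≥ A, f s = cp) ∧
        StrictMono (fun s => Real.exp s * f s)) := by
  constructor
  · intro f _ h0 h1 hf
    simpa [h0 0 le_rfl, h1 A le_rfl] using hf hA
  · intro hlt
    have hd : 0 < A + Real.log (cp / cm) := by
      have h := Real.log_lt_log hcm hlt
      rw [Real.log_mul (Real.exp_ne_zero _) hcp.ne', Real.log_exp] at h
      rw [Real.log_div hcp.ne' hcm.ne']
      linarith
    obtain ⟨h, hs, h0, h1, hmono⟩ := exists_smooth_strictMono_interp A _ hA hd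
    refine ⟨fun s => cm * Real.exp (h s - s), ?_, ?_, ?_, ?_⟩
    · fun_prop
    · intro s hs
      simp [h0 s hs]
    · intro s hs
      simp only [h1 s hs, add_sub_cancel_left]
      rw [Real.exp_log (div_pos hcp hcm)]
      field_simp
    · have e : (fun s => Real.exp s * (cm * Real.exp (h s - s))) =
          fun s => cm * Real.exp (h s) := by
        funext s
        rw [Real.exp_sub]
        field_simp
      rw [e]
      exact fun x y hxy => mul_lt_mul_of_pos_left (Real.exp_lt_exp.2 (hmono hxy)) hcm
end
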